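/- Let q be an integer with q ≥ 3 and let A ⊂ ℚ be a finite set with #A ≥ 2 such that the Hausdorff dimension of K(q,A) is strictly less than 1. Then for every rational r ≠ 0, every rational α, and every integer p ≥ 2 with gcd(p,q) = 1, the intersection (r·D_p + α) ∩ K(q,A) is a finite set. -/

import Mathlib

open MeasureTheory

/-- The self-similar set `K(q,A) = { ∑_{i=1}^∞ a_i/q^i : a_i ∈ A }`. -/
noncomputable def Kset (q : ℕ) (A : Finset ℚ) : Set ℝ :=
  { x : ℝ | ∃ a : ℕ → ℚ, (∀ i, a i ∈ A) ∧ x = ∑' i : ℕ, (a i : ℝ) / (q : ℝ) ^ (i + 1) }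

/-- The set `D_p = ⋃_{n≥1} ℤ/pⁿ` of rationals with a finite `p`-ary expansion. -/
def Dset (p : ℕ) : Set ℝ :=
  { x : ℝ | ∃ n : ℕ, 1 ≤ n ∧ ∃ m : ℤ, x = (m : ℝ) / (p : ℝ) ^ n }

/-!
Write `K = K(q,A)`. Choose `T > 0` such that `r`, `α` and all digits in `A` are integer
multiples of `T`, and project to the circle `ℝ / Tℤ`. The compact null set `K` becomes a closed
null set `X` with `q • X ⊆ X`, and the points of `r · D_p + α` become points whose order divides
a power of `p`, so it suffices that `X` contains only finitely many such points. If `x ∈ X` has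
order `N ∣ p ^ n`, then its orbit under multiplication by `q` consists of `ord_N(q)` points of
`X` at mutual distance at least `T / N`. By lifting the exponent, `ord_N(q) ≥ N / L` with `L`
independent of `N`, so the `T / (2 * N)`-neighbourhood of `X` has measure at least `T / L`. As `X`
is compact and null, this bounds `N`.
-/

open Filter Metric Topology
open scoped ENNReal Nat

section LiftingTheExponent

lemma emultiplicity_pow_sub_one {l : ℕ} (hl : l.Prime) {x : ℤ} (hlx : (l : ℤ) ∣ x - 1)
    (hx4 : l = 2 → 4 ∣ x - 1) (k : ℕ) :
    emultiplicity (l : ℤ) (x ^ k - 1) = emultiplicity (l : ℤ) ((x - 1) * k) := by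
  have hl' : Prime (l : ℤ) := Nat.prime_iff_prime_int.mp hl
  have hlx' : ¬(l : ℤ) ∣ x := fun h ↦ hl'.not_dvd_one ((dvd_sub_right h).mp hlx)
  rw [emultiplicity_mul hl']
  rcases hl.eq_two_or_odd' with rfl | hodd
  · simpa using Int.two_pow_sub_pow' k (hx4 rfl) hlx'
  · simpa [Int.natCast_emultiplicity] using Int.emultiplicity_pow_sub_pow hl hodd hlx hlx' k

lemma dvd_sub_one_mul_of_dvd_pow_sub_one {N k : ℕ} {x : ℤ}
    (hx : ∀ l : ℕ, l.Prime → l ∣ N → (l : ℤ) ∣ x - 1 ∧ (l = 2 → 4 ∣ x - 1))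
    (hN : (N : ℤ) ∣ x ^ k - 1) : (N : ℤ) ∣ (x - 1) * k := by
  rw [Int.natCast_dvd, Nat.dvd_iff_prime_pow_dvd_dvd]
  intro l j hl hlj
  rcases eq_or_ne j 0 with rfl | hj
  · simp
  obtain ⟨hlx, hx4⟩ := hx l hl ((dvd_pow_self l hj).trans hlj)
  have hpow : (l : ℤ) ^ j ∣ x ^ k - 1 := by
    exact_mod_cast (Int.natCast_dvd_natCast.mpr hlj).trans hN
  rw [← Int.natCast_dvd, Nat.cast_pow, pow_dvd_iff_le_emultiplicity,
    ← emultiplicity_pow_sub_one hl hlx hx4]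
  exact le_emultiplicity_of_pow_dvd hpow

variable {p q N n : ℕ}

lemma pos_of_coprime_of_one_lt (hq : 1 < q) (hpq : p.Coprime q) : 0 < p := by
  refine Nat.pos_of_ne_zero ?_
  rintro rfl
  exact hq.ne' ((Nat.coprime_zero_left q).mp hpq)

lemma pow_two_mul_totient_sub_one_pos (hq : 1 < q) (hpq : p.Coprime q) :
    0 < q ^ (2 * φ p) - 1 := by
  have hφ : 0 < φ p := Nat.totient_pos.mpr (pos_of_coprime_of_one_lt hq hpq)
  exact Nat.sub_pos_of_lt (Nat.one_lt_pow (by positivity) hq)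

-- The factor `2` in the exponent makes the power a square, hence `1` modulo `4` when `q` is odd.
lemma dvd_pow_two_mul_totient_sub_one_of_prime_dvd (hpq : p.Coprime q) {l : ℕ} (hl : l.Prime)
    (hlp : l ∣ p) :
    (l : ℤ) ∣ (q : ℤ) ^ (2 * φ p) - 1 ∧ (l = 2 → 4 ∣ (q : ℤ) ^ (2 * φ p) - 1) := by
  rw [mul_comm, pow_mul]
  constructor
  · have hp : (p : ℤ) ∣ (q : ℤ) ^ φ p - 1 := by
      exact_mod_cast (Nat.modEq_iff_dvd.mp (Nat.ModEq.pow_totient hpq.symm).symm)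
    have hsq : (q : ℤ) ^ φ p - 1 ∣ ((q : ℤ) ^ φ p) ^ 2 - 1 := sub_one_dvd_pow_sub_one _ 2
    exact ((Int.natCast_dvd_natCast.mpr hlp).trans hp).trans hsq
  · rintro rfl
    have hq : Odd q := Nat.coprime_two_left.mp (hpq.coprime_dvd_left hlp)
    exact (by norm_num : (4 : ℤ) ∣ 8).trans
      (Int.eight_dvd_sq_sub_one_of_odd (Odd.pow (by exact_mod_cast hq)))

lemma dvd_mul_orderOf_of_dvd_pow (hpq : p.Coprime q) (hN : N ∣ p ^ n) :
    (N : ℤ) ∣ ((q : ℤ) ^ (2 * φ p) - 1) * orderOf (q : ZMod N) := by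
  apply dvd_sub_one_mul_of_dvd_pow_sub_one
  · exact fun l hl hlN ↦ dvd_pow_two_mul_totient_sub_one_of_prime_dvd hpq hl
      (hl.dvd_of_dvd_pow (hlN.trans hN))
  · rw [← ZMod.intCast_zmod_eq_zero_iff_dvd]
    push_cast
    rw [← pow_mul, mul_comm, pow_mul, pow_orderOf_eq_one, one_pow, sub_self]

lemma le_mul_orderOf_of_dvd_pow (hq : 1 < q) (hpq : p.Coprime q) (hN : N ∣ p ^ n) :
    N ≤ (q ^ (2 * φ p) - 1) * orderOf (q : ZMod N) := by
  have hp : 0 < p := pos_of_coprime_of_one_lt hq hpq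
  have : NeZero N := ⟨ne_zero_of_dvd_ne_zero (pow_pos hp n).ne' hN⟩
  have hqN : q.Coprime N := (hpq.symm.pow_right n).coprime_dvd_right hN
  have horder : 0 < orderOf (q : ZMod N) :=
    (isOfFinOrder_iff_isUnit.mpr ((ZMod.isUnit_iff_coprime q N).mpr hqN)).orderOf_pos
  refine Nat.le_of_dvd (mul_pos (pow_two_mul_totient_sub_one_pos hq hpq) horder) ?_
  zify [Nat.one_le_pow (2 * φ p) q (by lia)]
  exact dvd_mul_orderOf_of_dvd_pow hpq hN

end LiftingTheExponent

lemma injOn_pow_nsmul {G : Type*} [AddLeftCancelMonoid G] (q : ℕ) (x : G) :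
    Set.InjOn (fun k : ℕ ↦ q ^ k • x) (Set.Iio (orderOf (q : ZMod (addOrderOf x)))) := by
  intro i hi j hj hij
  apply pow_injOn_Iio_orderOf hi hj
  have h := nsmul_eq_nsmul_iff_modEq.mp hij
  rw [← ZMod.natCast_eq_natCast_iff] at h
  exact_mod_cast h

lemma card_mul_le_measure_cthickening {E ι : Type*} [PseudoMetricSpace E] [MeasurableSpace E]
    [OpensMeasurableSpace E] (μ : Measure E) {X : Set E} {s : Finset ι} {f : ι → E} {δ : ℝ}
    {c : ℝ≥0∞} (hfX : ∀ i ∈ s, f i ∈ X)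
    (hsep : (s : Set ι).Pairwise fun i j ↦ δ + δ ≤ dist (f i) (f j))
    (hball : ∀ i ∈ s, c ≤ μ (ball (f i) δ)) :
    s.card * c ≤ μ (cthickening δ X) :=
  calc s.card * c = ∑ _i ∈ s, c := by rw [Finset.sum_const, nsmul_eq_mul]
    _ ≤ ∑ i ∈ s, μ (ball (f i) δ) := Finset.sum_le_sum hball
    _ = μ (⋃ i ∈ s, ball (f i) δ) :=
      (measure_biUnion_finset (fun _ hi _ hj hij ↦ ball_disjoint_ball (hsep hi hj hij))
        fun _ _ ↦ measurableSet_ball).symm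
    _ ≤ μ (cthickening δ X) := measure_mono <| Set.iUnion₂_subset fun i hi ↦
      ball_subset_closedBall.trans (closedBall_subset_cthickening (hfX i hi) δ)

section AddCircle

variable {T : ℝ} {p q : ℕ}

lemma mapsTo_nsmul_coe_image {K : Set ℝ}
    (hK : ∀ x ∈ K, ∃ a ∈ AddSubgroup.zmultiples T, q * x - a ∈ K) :
    Set.MapsTo (q • ·) ((↑) '' K : Set (AddCircle T)) ((↑) '' K) := by
  rintro _ ⟨x, hx, rfl⟩
  obtain ⟨a, ha, hxa⟩ := hK x hx
  refine ⟨_, hxa, ?_⟩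
  rw [AddCircle.coe_sub, (QuotientAddGroup.eq_zero_iff a).mpr ha, sub_zero, ← nsmul_eq_mul,
    AddCircle.coe_nsmul]

lemma exists_pow_nsmul_coe_eq_zero (hp : p ≠ 0) {y : ℝ} (hy : y ∈ Dset p) {r α : ℝ}
    (hr : r ∈ AddSubgroup.zmultiples T) (hα : α ∈ AddSubgroup.zmultiples T) :
    ∃ n : ℕ, p ^ n • ((r * y + α : ℝ) : AddCircle T) = 0 := by
  obtain ⟨n, -, m, rfl⟩ := hy
  have hclear : p ^ n • (r * (m / (p : ℝ) ^ n) + α) = m • r + p ^ n • α := by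
    simp only [nsmul_eq_mul, zsmul_eq_mul, Nat.cast_pow]
    field_simp
  refine ⟨n, ?_⟩
  rw [← AddCircle.coe_nsmul, hclear]
  exact (QuotientAddGroup.eq_zero_iff _).mpr (add_mem (zsmul_mem hr m) (nsmul_mem hα _))

variable [hT : Fact (0 < T)]

lemma volume_ball_addCircle (x : AddCircle T) (ε : ℝ) :
    volume (ball x ε) = ENNReal.ofReal (min T (2 * ε)) := by
  rw [← measure_congr AddCircle.closedBall_ae_eq_ball, AddCircle.volume_closedBall]

lemma div_addOrderOf_le_dist {x y z : AddCircle T} (hx : IsOfFinAddOrder x)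
    (hy : y ∈ AddSubgroup.zmultiples x) (hz : z ∈ AddSubgroup.zmultiples x) (hyz : y ≠ z) :
    T / addOrderOf x ≤ dist y z := by
  have hmem : y - z ∈ AddSubgroup.zmultiples x := sub_mem hy hz
  have hpos : (0 : ℝ) < addOrderOf x := by exact_mod_cast hx.addOrderOf_pos
  rw [div_le_iff₀' hpos, dist_eq_norm, ← nsmul_eq_mul]
  calc T ≤ addOrderOf (y - z) • ‖y - z‖ :=
        AddCircle.le_add_order_smul_norm_of_isOfFinAddOrder (hx.of_mem_zmultiples hmem)
          (sub_ne_zero.mpr hyz)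
    _ ≤ addOrderOf x • ‖y - z‖ := nsmul_le_nsmul_left (norm_nonneg _)
        (Nat.le_of_dvd hx.addOrderOf_pos (addOrderOf_dvd_of_mem_zmultiples hmem))

variable {X : Set (AddCircle T)}

lemma orderOf_mul_le_volume_cthickening (hqX : Set.MapsTo (q • ·) X X) {x : AddCircle T}
    (hxX : x ∈ X) (hx : IsOfFinAddOrder x) :
    orderOf (q : ZMod (addOrderOf x)) * ENNReal.ofReal (T / addOrderOf x) ≤
      volume (cthickening (T / (2 * addOrderOf x)) X) := by
  have hhalf : 2 * (T / (2 * addOrderOf x)) = T / addOrderOf x := by ring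
  have horbit : ∀ k : ℕ, q ^ k • x ∈ X := by
    intro k
    have h := hqX.iterate k hxX
    rwa [smul_iterate] at h
  rw [← Finset.card_range (orderOf (q : ZMod (addOrderOf x)))]
  refine card_mul_le_measure_cthickening volume (f := fun k ↦ q ^ k • x) (fun k _ ↦ horbit k)
    ?_ ?_
  · intro i hi j hj hij
    rw [← two_mul, hhalf]
    refine div_addOrderOf_le_dist hx (nsmul_mem (AddSubgroup.mem_zmultiples x) _)
      (nsmul_mem (AddSubgroup.mem_zmultiples x) _) fun h ↦ hij ?_
    exact injOn_pow_nsmul q x (by simpa using hi) (by simpa using hj) h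
  · intro k _
    have hle : T / addOrderOf x ≤ T :=
      div_le_self hT.out.le (by exact_mod_cast hx.addOrderOf_pos)
    rw [volume_ball_addCircle, hhalf, min_eq_right hle]

lemma ofReal_div_le_volume_cthickening (hq : 1 < q) (hpq : p.Coprime q)
    (hqX : Set.MapsTo (q • ·) X X) {x : AddCircle T} (hxX : x ∈ X) {n : ℕ}
    (hxp : addOrderOf x ∣ p ^ n) :
    ENNReal.ofReal (T / (q ^ (2 * φ p) - 1 : ℕ)) ≤
      volume (cthickening (T / (2 * addOrderOf x)) X) := by
  have hpos : 0 < addOrderOf x :=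
    Nat.pos_of_dvd_of_pos hxp (pow_pos (pos_of_coprime_of_one_lt hq hpq) n)
  refine le_trans ?_ (orderOf_mul_le_volume_cthickening hqX hxX (addOrderOf_pos_iff.mp hpos))
  have hle := le_mul_orderOf_of_dvd_pow hq hpq hxp
  have hL := pow_two_mul_totient_sub_one_pos hq hpq
  rw [← ENNReal.ofReal_natCast (orderOf _), ← ENNReal.ofReal_mul (Nat.cast_nonneg _)]
  apply ENNReal.ofReal_le_ofReal
  rw [mul_div_assoc', div_le_div_iff₀ (by exact_mod_cast hL) (by exact_mod_cast hpos),
    mul_right_comm, mul_comm T]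
  gcongr
  · exact hT.out.le
  · rw [mul_comm]
    exact_mod_cast hle

theorem finite_setOf_mem_and_pow_nsmul_eq_zero (hq : 1 < q) (hpq : p.Coprime q) (hX : IsClosed X)
    (hX0 : volume X = 0) (hqX : Set.MapsTo (q • ·) X X) :
    {x ∈ X | ∃ n : ℕ, p ^ n • x = 0}.Finite := by
  have hradius : Tendsto (fun N : ℕ ↦ T / (2 * N)) atTop (𝓝 0) := by
    simp_rw [← div_div]
    exact tendsto_const_div_atTop_nhds_zero_nat (T / 2)
  have hvolume : Tendsto (fun N : ℕ ↦ volume (cthickening (T / (2 * N)) X)) atTop (𝓝 0) :=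
    hX0 ▸ (tendsto_measure_cthickening_of_isCompact hX.isCompact).comp hradius
  have hc : 0 < ENNReal.ofReal (T / (q ^ (2 * φ p) - 1 : ℕ)) := ENNReal.ofReal_pos.mpr <|
    div_pos hT.out (by exact_mod_cast pow_two_mul_totient_sub_one_pos hq hpq)
  obtain ⟨B, hB⟩ := eventually_atTop.mp (hvolume.eventually_lt_const hc)
  refine (AddCircle.finite_torsion T B.factorial_pos).subset ?_
  rintro x ⟨hxX, n, hxn⟩
  have hxp : addOrderOf x ∣ p ^ n := addOrderOf_dvd_of_nsmul_eq_zero hxn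
  have hpos : 0 < addOrderOf x :=
    Nat.pos_of_dvd_of_pos hxp (pow_pos (pos_of_coprime_of_one_lt hq hpq) n)
  have hxB : addOrderOf x ≤ B := by
    by_contra! hlt
    exact (hB _ hlt.le).not_ge (ofReal_div_le_volume_cthickening hq hpq hqX hxX hxp)
  exact addOrderOf_dvd_iff_nsmul_eq_zero.mp (Nat.dvd_factorial hpos hxB)

lemma volume_coe_image_eq_zero {K : Set ℝ} (hK : IsCompact K) (hK0 : volume K = 0) :
    volume ((↑) '' K : Set (AddCircle T)) = 0 := by
  have hpre : volume (QuotientAddGroup.mk ⁻¹' ((↑) '' K : Set (AddCircle T)) : Set ℝ) = 0 := by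
    rw [QuotientAddGroup.preimage_image_mk_eq_iUnion_image, measure_iUnion_null_iff]
    intro t
    rwa [Set.image_add_right, measure_preimage_add_right]
  have hmeas : MeasurableSet ((↑) '' K : Set (AddCircle T)) :=
    (hK.image (AddCircle.continuous_mk' T)).measurableSet
  rw [AddCircle.add_projection_respects_measure T 0 hmeas]
  exact measure_mono_null Set.inter_subset_left hpre

lemma finite_inter_preimage_coe {K : Set ℝ} (hK : IsCompact K) {F : Set (AddCircle T)}
    (hF : F.Finite) : (K ∩ (↑) ⁻¹' F).Finite := by
  rw [← Set.biUnion_of_singleton F, Set.preimage_iUnion₂, Set.inter_iUnion₂]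
  refine hF.biUnion fun c _ ↦ ?_
  induction c using QuotientAddGroup.induction_on with | H y
  have hshift : IsCompact ((· - y) '' K) := hK.image (by fun_prop)
  have hfin : {k : ℤ | k • T ∈ (· - y) '' K}.Finite := by
    have h := Int.tendsto_zmultiplesHom_cofinite hT.out.ne' hshift.compl_mem_cocompact
    rwa [mem_map, mem_cofinite, ← Set.preimage_compl, compl_compl] at h
  refine (hfin.image fun k ↦ k • T + y).subset ?_
  rintro x ⟨hxK, hx⟩
  have hsub : ((x - y : ℝ) : AddCircle T) = 0 := sub_eq_zero.mpr hx
  obtain ⟨k, hk⟩ := (AddCircle.coe_eq_zero_iff T).mp hsub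
  exact ⟨k, ⟨x, hxK, hk.symm⟩, by simp [hk]⟩

end AddCircle

lemma exists_pos_forall_mem_zmultiples (S : Finset ℚ) :
    ∃ T : ℝ, 0 < T ∧ ∀ a ∈ S, (a : ℝ) ∈ AddSubgroup.zmultiples T := by
  have hpos : 0 < ∏ a ∈ S, a.den := Finset.prod_pos fun a _ ↦ a.den_pos
  refine ⟨(∏ a ∈ S, a.den : ℕ)⁻¹, inv_pos.mpr (by exact_mod_cast hpos), fun a ha ↦ ?_⟩
  obtain ⟨c, hc⟩ := Finset.dvd_prod_of_mem Rat.den ha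
  have hc0 : (c : ℝ) ≠ 0 := Nat.cast_ne_zero.mpr (right_ne_zero_of_mul (hc ▸ hpos.ne'))
  refine AddSubgroup.mem_zmultiples_iff.mpr ⟨a.num * c, ?_⟩
  conv_rhs => rw [Rat.cast_def]
  rw [hc, zsmul_eq_mul]
  push_cast
  field_simp

theorem finite_intersection_affine_image_general {p q : ℕ} (hq : 1 < q) (hpq : p.Coprime q)
    {K : Set ℝ} (hK : IsCompact K) (hK0 : volume K = 0) {A : Finset ℚ}
    (hKA : ∀ x ∈ K, ∃ a ∈ A, q * x - (a : ℝ) ∈ K) (r α : ℚ) :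
    (((fun x : ℝ ↦ (r : ℝ) * x + (α : ℝ)) '' Dset p) ∩ K).Finite := by
  obtain ⟨T, hT, hS⟩ := exists_pos_forall_mem_zmultiples (insert r (insert α A))
  have : Fact (0 < T) := ⟨hT⟩
  have hclosed : IsClosed ((↑) '' K : Set (AddCircle T)) :=
    (hK.image (AddCircle.continuous_mk' T)).isClosed
  have hmaps : Set.MapsTo (q • ·) ((↑) '' K : Set (AddCircle T)) ((↑) '' K) :=
    mapsTo_nsmul_coe_image fun x hx ↦ (hKA x hx).imp' (↑) fun a ha ↦ ⟨hS a (by simp [ha.1]), ha.2⟩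
  have hfin := finite_setOf_mem_and_pow_nsmul_eq_zero hq hpq hclosed
    (volume_coe_image_eq_zero hK hK0) hmaps
  refine (finite_inter_preimage_coe hK hfin).subset ?_
  rintro _ ⟨⟨y, hy, rfl⟩, hyK⟩
  exact ⟨hyK, ⟨_, hyK, rfl⟩, exists_pow_nsmul_coe_eq_zero (pos_of_coprime_of_one_lt hq hpq).ne' hy
    (hS r (by simp)) (hS α (by simp))⟩

section SelfSimilarSet

variable {q : ℕ} {A : Finset ℚ}

lemma norm_div_pow_le {a : ℚ} (ha : a ∈ A) (i : ℕ) :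
    ‖(a : ℝ) / (q : ℝ) ^ (i + 1)‖ ≤ (∑ b ∈ A, |(b : ℝ)|) / (q : ℝ) ^ (i + 1) := by
  rw [norm_div, norm_pow, Real.norm_natCast, Real.norm_eq_abs]
  gcongr
  exact Finset.single_le_sum (f := fun b : ℚ ↦ |(b : ℝ)|) (fun _ _ ↦ abs_nonneg _) ha

lemma summable_const_div_pow_succ (hq : 1 < q) (C : ℝ) :
    Summable fun i : ℕ ↦ C / (q : ℝ) ^ (i + 1) := by
  have hgeom : Summable fun i : ℕ ↦ ((q : ℝ)⁻¹) ^ i :=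
    summable_geometric_of_lt_one (by positivity) (inv_lt_one_of_one_lt₀ (by exact_mod_cast hq))
  simpa only [div_eq_mul_inv, inv_pow] using
    ((summable_nat_add_iff 1).mpr hgeom).mul_left C

lemma isCompact_Kset (hq : 1 < q) : IsCompact (Kset q A) := by
  have hcont : Continuous fun a : ℕ → A ↦ ∑' i : ℕ, ((a i : ℚ) : ℝ) / (q : ℝ) ^ (i + 1) := by
    refine continuous_tsum (fun i ↦ ?_) (summable_const_div_pow_succ hq _)
      fun i a ↦ norm_div_pow_le (a i).2 i
    exact ((continuous_of_discreteTopology (f := fun b : A ↦ ((b : ℚ) : ℝ))).comp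
      (continuous_apply i)).div_const _
  convert isCompact_range hcont using 1
  ext x
  constructor
  · rintro ⟨a, ha, rfl⟩
    exact ⟨fun i ↦ ⟨a i, ha i⟩, rfl⟩
  · rintro ⟨a, rfl⟩
    exact ⟨fun i ↦ a i, fun i ↦ (a i).2, rfl⟩

lemma exists_mul_sub_mem_Kset (hq : 1 < q) {x : ℝ} (hx : x ∈ Kset q A) :
    ∃ a ∈ A, q * x - (a : ℝ) ∈ Kset q A := by
  obtain ⟨a, ha, rfl⟩ := hx
  refine ⟨a 0, ha 0, fun i ↦ a (i + 1), fun i ↦ ha (i + 1), ?_⟩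
  have hq0 : (q : ℝ) ≠ 0 := by positivity
  have hsum : Summable fun i : ℕ ↦ (a i : ℝ) / (q : ℝ) ^ (i + 1) :=
    .of_norm_bounded (summable_const_div_pow_succ hq _) fun i ↦ norm_div_pow_le (ha i) i
  have hshift (i : ℕ) : (q : ℝ) * (a (i + 1) / (q : ℝ) ^ (i + 1 + 1)) =
      a (i + 1) / (q : ℝ) ^ (i + 1) := by
    rw [pow_succ' _ (i + 1), mul_div_assoc', mul_div_mul_left _ _ hq0]
  rw [hsum.tsum_eq_zero_add, mul_add, ← tsum_mul_left, zero_add, pow_one, mul_div_cancel₀ _ hq0,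
    add_sub_cancel_left]
  exact tsum_congr hshift

end SelfSimilarSet

lemma volume_eq_zero_of_dimH_lt_one {K : Set ℝ} (hK : dimH K < 1) : volume K = 0 :=
  measure_zero_of_dimH_lt (d := 1)
    (by simp [hausdorffMeasure_real, Measure.AbsolutelyContinuous.refl]) (by exact_mod_cast hK)

theorem finite_intersection_affine_image (q : ℕ) (hq : 3 ≤ q) (A : Finset ℚ)
    (hA : 2 ≤ A.card) (hdim : dimH (Kset q A) < 1)
    (r : ℚ) (hr : r ≠ 0) (α : ℚ) (p : ℕ) (hp : 2 ≤ p) (hpq : Nat.Coprime p q) :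
    (((fun x : ℝ => (r : ℝ) * x + (α : ℝ)) '' Dset p) ∩ Kset q A).Finite :=
  have hq1 : 1 < q := by lia
  finite_intersection_affine_image_general hq1 hpq (isCompact_Kset hq1)
    (volume_eq_zero_of_dimH_lt_one hdim) (fun _ ↦ exists_mul_sub_mem_Kset hq1) r α
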